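/- Assume A1, A2 and A4. Consider the stochastic gradient Euler–Maruyama chain Z̃_n = (X̃_n,Ṽ_n) with time step h and damping rate γ, started from initial data with E(|X̃₀|+|Ṽ₀|+1)² < ∞. There exists γ₀ > 0 such that whenever γ ≥ γ₀, there exist constants C, h₀ > 0 depending on γ such that for every 0 < h ≤ h₀ and every integer N ≥ 1: E[|X̃_N − X̃₀|² + |Ṽ_N − Ṽ₀|²] ≤ C·N·h·E(|X̃₀|+|Ṽ₀|+1)². -/

import Mathlib

open MeasureTheory ProbabilityTheory RealInnerProductSpace
open scoped ENNReal

/-!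
Write `y = X_n - X₀` and `u = V_n - V₀` and follow the energy `|γ y + u|² + |u|²` of the
displacement itself rather than that of the chain. In one step the force contributes
`-2γ⟨y, b⟩ = -2γ⟨X_n, b⟩ + 2γ⟨X₀, b⟩`: its first part is dissipative by the drift condition and
absorbs every term quadratic in `X_n`, while the friction absorbs every term quadratic in `V_n` once
`γ² m ≥ 32 C₁²`. What remains is `O(h) (1 + |X₀|² + |V₀|²)`, plus a centred noise term and the
`O(h)` variance of the noise. The energy starts at `0`, so it is at most `O(N h)` in mean after `N`
steps, without any separate bound on the moments of the chain.
-/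

section Energy

variable {E : Type*} [NormedAddCommGroup E] [InnerProductSpace ℝ E] {C₀ C₁ m γ h : ℝ}

/-- The energy `|γ y + u|² + |u|²` of a position `y` and velocity `u`, the Lyapunov function of
the argument. Adding `γ y` to the velocity makes friction and transport cancel in the first term. -/
def lyapunov (γ : ℝ) (y u : E) : ℝ :=
  ‖γ • y + u‖ ^ 2 + ‖u‖ ^ 2

/-- The growth rate per unit of time, divided by `γ (1 + |x₀|² + |v₀|²)`, of the energy of the
displacement from `(x₀, v₀)` in the absence of noise. -/
noncomputable def driftConst (C₀ C₁ m : ℝ) : ℝ :=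
  2 * C₀ + 2 * m + 4 * C₁ ^ 2 / m + 3

lemma driftConst_pos (hC₀ : 0 ≤ C₀) (hm : 0 < m) : 0 < driftConst C₀ C₁ m := by
  unfold driftConst
  positivity

lemma norm_sq_add_norm_sq_le_three_mul_lyapunov (hγ : 1 ≤ γ) (y u : E) :
    ‖y‖ ^ 2 + ‖u‖ ^ 2 ≤ 3 * lyapunov γ y u := by
  have hy : ‖y‖ ≤ ‖γ • y + u‖ + ‖u‖ :=
    calc ‖y‖ ≤ γ * ‖y‖ := le_mul_of_one_le_left (norm_nonneg y) hγ
      _ = ‖γ • y + u - u‖ := by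
        rw [add_sub_cancel_right, norm_smul_of_nonneg (zero_le_one.trans hγ)]
      _ ≤ ‖γ • y + u‖ + ‖u‖ := norm_sub_le _ _
  have hy_sq : ‖y‖ ^ 2 ≤ 2 * (‖γ • y + u‖ ^ 2 + ‖u‖ ^ 2) :=
    (pow_le_pow_left₀ (norm_nonneg y) hy 2).trans add_sq_le
  unfold lyapunov
  linarith [sq_nonneg ‖γ • y + u‖]

lemma lyapunov_add_right (γ : ℝ) (y u s : E) :
    lyapunov γ y (u + s) = lyapunov γ y u + 2 * ⟪γ • y + (2 : ℝ) • u, s⟫ + 2 * ‖s‖ ^ 2 := by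
  simp only [lyapunov, ← add_assoc, norm_add_sq_real, inner_add_left, real_inner_smul_left]
  ring

lemma lyapunov_euler_step (γ h : ℝ) (y u v B : E) :
    lyapunov γ (y + h • v) (u - h • (B + γ • v)) = lyapunov γ y u
      + h * (-(2 * γ * ⟪y, B⟫) - 4 * ⟪u, B⟫ - 2 * γ * ⟪u, v⟫
        + h * (‖B‖ ^ 2 + ‖B + γ • v‖ ^ 2)) := by
  have hshift : γ • (y + h • v) + (u - h • (B + γ • v)) = γ • y + u - h • B := by module
  rw [lyapunov, lyapunov, hshift, norm_sub_sq_real (γ • y + u), norm_sub_sq_real u]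
  simp only [inner_smul_right, inner_add_left, inner_add_right, real_inner_smul_left, norm_smul,
    mul_pow, Real.norm_eq_abs, sq_abs]
  ring

lemma neg_inner_position_le {x B : E} (hm : 0 < m) (hB : ‖B‖ ≤ C₁ * (1 + ‖x‖))
    (hdrift : m * ‖x‖ ^ 2 - C₀ ≤ ⟪x, B⟫) (x₀ : E) :
    -(2 * ⟪x - x₀, B⟫) ≤ 2 * C₀ - 2 * m * ‖x‖ ^ 2 + m / 4 * (1 + ‖x‖) ^ 2
      + 4 * C₁ ^ 2 / m * ‖x₀‖ ^ 2 := by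
  have hx₀ : ⟪x₀, B⟫ ≤ (1 + ‖x‖) * (C₁ * ‖x₀‖) :=
    calc ⟪x₀, B⟫ ≤ ‖x₀‖ * ‖B‖ := real_inner_le_norm x₀ B
      _ ≤ ‖x₀‖ * (C₁ * (1 + ‖x‖)) := by gcongr
      _ = (1 + ‖x‖) * (C₁ * ‖x₀‖) := by ring
  have hyoung : 2 * (1 + ‖x‖) * (C₁ * ‖x₀‖) ≤
      m / 4 * (1 + ‖x‖) ^ 2 + (m / 4)⁻¹ * (C₁ * ‖x₀‖) ^ 2 :=
    two_mul_le_add_mul_sq (by positivity)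
  have hconst : (m / 4)⁻¹ * (C₁ * ‖x₀‖) ^ 2 = 4 * C₁ ^ 2 / m * ‖x₀‖ ^ 2 := by
    field_simp
  rw [inner_sub_left]
  linarith

lemma four_mul_abs_inner_le {x B : E} (hγ : 0 < γ) (hγm : 32 * C₁ ^ 2 ≤ γ ^ 2 * m)
    (hB : ‖B‖ ≤ C₁ * (1 + ‖x‖)) (v : E) :
    4 * |⟪v, B⟫| ≤ γ / 2 * ‖v‖ ^ 2 + γ * m / 4 * (1 + ‖x‖) ^ 2 := by
  have hB_sq : ‖B‖ ^ 2 ≤ C₁ ^ 2 * (1 + ‖x‖) ^ 2 := by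
    rw [← mul_pow]
    exact pow_le_pow_left₀ (norm_nonneg B) hB 2
  have habsorb : (γ / 4)⁻¹ * ‖B‖ ^ 2 ≤ γ * m / 8 * (1 + ‖x‖) ^ 2 := by
    rw [inv_mul_le_iff₀ (by positivity)]
    linarith [mul_le_mul_of_nonneg_right hγm (sq_nonneg (1 + ‖x‖))]
  have hyoung : 2 * ‖v‖ * ‖B‖ ≤ γ / 4 * ‖v‖ ^ 2 + (γ / 4)⁻¹ * ‖B‖ ^ 2 :=
    two_mul_le_add_mul_sq (by positivity)
  linarith [abs_real_inner_le_norm v B]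

lemma neg_inner_sub_self_le (v v₀ : E) :
    -(2 * ⟪v - v₀, v⟫) ≤ -(3 / 2 * ‖v‖ ^ 2) + 2 * ‖v₀‖ ^ 2 := by
  rw [inner_sub_left, real_inner_self_eq_norm_sq]
  linarith [real_inner_le_norm v₀ v, sq_nonneg (2 * ‖v₀‖ - ‖v‖)]

lemma euler_second_order_le {x B : E} (hγ : 0 < γ) (hγm : 32 * C₁ ^ 2 ≤ γ ^ 2 * m)
    (hh : 0 ≤ h) (hγh : γ * h ≤ 1 / 2) (hB : ‖B‖ ≤ C₁ * (1 + ‖x‖)) (v : E) :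
    h * (‖B‖ ^ 2 + ‖B + γ • v‖ ^ 2) ≤ γ * m / 4 * (1 + ‖x‖) ^ 2 + γ * ‖v‖ ^ 2 := by
  have hB_sq : ‖B‖ ^ 2 ≤ C₁ ^ 2 * (1 + ‖x‖) ^ 2 := by
    rw [← mul_pow]
    exact pow_le_pow_left₀ (norm_nonneg B) hB 2
  have hsum : ‖B + γ • v‖ ^ 2 ≤ 2 * (‖B‖ ^ 2 + (γ * ‖v‖) ^ 2) := by
    rw [← norm_smul_of_nonneg hγ.le]
    exact (pow_le_pow_left₀ (norm_nonneg _) (norm_add_le B (γ • v)) 2).trans add_sq_le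
  have hcoeff : 3 * h * C₁ ^ 2 ≤ γ * m / 4 := by
    have hm : 0 ≤ γ * m := nonneg_of_mul_nonneg_right (by nlinarith [sq_nonneg C₁]) hγ
    nlinarith [mul_le_mul_of_nonneg_left hγm hh, mul_le_mul_of_nonneg_right hγh hm]
  have hboth : ‖B‖ ^ 2 + ‖B + γ • v‖ ^ 2 ≤
      3 * (C₁ ^ 2 * (1 + ‖x‖) ^ 2) + 2 * (γ * ‖v‖) ^ 2 := by linarith
  calc h * (‖B‖ ^ 2 + ‖B + γ • v‖ ^ 2)
      ≤ h * (3 * (C₁ ^ 2 * (1 + ‖x‖) ^ 2) + 2 * (γ * ‖v‖) ^ 2) :=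
        mul_le_mul_of_nonneg_left hboth hh
    _ = 3 * h * C₁ ^ 2 * (1 + ‖x‖) ^ 2 + 2 * (γ * h) * (γ * ‖v‖ ^ 2) := by ring
    _ ≤ γ * m / 4 * (1 + ‖x‖) ^ 2 + 2 * (1 / 2) * (γ * ‖v‖ ^ 2) := by gcongr
    _ = γ * m / 4 * (1 + ‖x‖) ^ 2 + γ * ‖v‖ ^ 2 := by ring

theorem lyapunov_euler_step_sub_le {x B : E} (hC₀ : 0 ≤ C₀) (hm : 0 < m) (hγ : 0 < γ)
    (hγm : 32 * C₁ ^ 2 ≤ γ ^ 2 * m) (hh : 0 ≤ h) (hγh : γ * h ≤ 1 / 2)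
    (hB : ‖B‖ ≤ C₁ * (1 + ‖x‖)) (hdrift : m * ‖x‖ ^ 2 - C₀ ≤ ⟪x, B⟫) (v x₀ v₀ : E) :
    lyapunov γ (x - x₀ + h • v) (v - v₀ - h • (B + γ • v)) ≤
      lyapunov γ (x - x₀) (v - v₀)
        + γ * driftConst C₀ C₁ m * h * (1 + ‖x₀‖ ^ 2 + ‖v₀‖ ^ 2) := by
  have hposition := mul_le_mul_of_nonneg_left (neg_inner_position_le hm hB hdrift x₀) hγ.le
  have hvelocity : -(4 * ⟪v - v₀, B⟫) ≤
      γ / 2 * (‖v‖ ^ 2 + ‖v₀‖ ^ 2) + γ * m / 2 * (1 + ‖x‖) ^ 2 := by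
    rw [inner_sub_left]
    linarith [four_mul_abs_inner_le hγ hγm hB v, four_mul_abs_inner_le hγ hγm hB v₀,
      neg_abs_le ⟪v, B⟫, le_abs_self ⟪v₀, B⟫]
  have hfriction := mul_le_mul_of_nonneg_left (neg_inner_sub_self_le v v₀) hγ.le
  have hsecond := euler_second_order_le hγ hγm hh hγh hB v
  have hsq : γ * m * (1 + ‖x‖) ^ 2 ≤ γ * m * (2 * (1 ^ 2 + ‖x‖ ^ 2)) := by
    gcongr
    exact add_sq_le
  have hrate : 2 * C₀ + 2 * m + 4 * C₁ ^ 2 / m * ‖x₀‖ ^ 2 + 3 * ‖v₀‖ ^ 2 ≤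
      driftConst C₀ C₁ m * (1 + ‖x₀‖ ^ 2 + ‖v₀‖ ^ 2) := by
    have hnonneg : 0 ≤ (2 * C₀ + 2 * m) * (‖x₀‖ ^ 2 + ‖v₀‖ ^ 2)
        + 4 * C₁ ^ 2 / m * (1 + ‖v₀‖ ^ 2) + 3 * (1 + ‖x₀‖ ^ 2) := by positivity
    unfold driftConst
    linarith
  have hfirst : -(2 * γ * ⟪x - x₀, B⟫) - 4 * ⟪v - v₀, B⟫ - 2 * γ * ⟪v - v₀, v⟫
      + h * (‖B‖ ^ 2 + ‖B + γ • v‖ ^ 2) ≤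
      γ * (driftConst C₀ C₁ m * (1 + ‖x₀‖ ^ 2 + ‖v₀‖ ^ 2)) := by
    refine le_trans ?_ (mul_le_mul_of_nonneg_left hrate hγ.le)
    linarith [mul_nonneg hγ.le (sq_nonneg ‖v₀‖)]
  rw [lyapunov_euler_step]
  linarith [mul_le_mul_of_nonneg_left hfirst hh]

end Energy

section SquareIntegrable

variable {Ω E : Type*} {mΩ : MeasurableSpace Ω} {P : Measure Ω}
  [NormedAddCommGroup E] {f g : Ω → E}

lemma integrable_norm_sq_of_memLp_two (hf : MemLp f 2 P) : Integrable (fun ω => ‖f ω‖ ^ 2) P :=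
  hf.norm.integrable_sq

lemma memLp_two_of_lintegral_sq_lt_top {r : Ω → ℝ} (hf : AEStronglyMeasurable f P)
    (hr : ∫⁻ ω, ENNReal.ofReal (r ω ^ 2) ∂P < ∞) (hfr : ∀ ω, ‖f ω‖ ≤ r ω) : MemLp f 2 P := by
  rw [memLp_two_iff_integrable_sq_norm hf]
  refine ⟨by fun_prop, (hasFiniteIntegral_iff_ofReal (ae_of_all _ fun ω => sq_nonneg _)).2 ?_⟩
  refine (lintegral_mono fun ω => ENNReal.ofReal_le_ofReal ?_).trans_lt hr
  gcongr
  exact hfr ω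

variable [InnerProductSpace ℝ E]

lemma integrable_inner_of_memLp_two (hf : MemLp f 2 P) (hg : MemLp g 2 P) :
    Integrable (fun ω => ⟪f ω, g ω⟫) P :=
  memLp_one_iff_integrable.1 ((innerSL ℝ).memLp_of_bilin 1 hf hg)

lemma integrable_lyapunov (γ : ℝ) (hf : MemLp f 2 P) (hg : MemLp g 2 P) :
    Integrable (fun ω => lyapunov γ (f ω) (g ω)) P :=
  (integrable_norm_sq_of_memLp_two ((hf.const_smul γ).add hg)).add
    (integrable_norm_sq_of_memLp_two hg)

lemma integral_inner_eq_zero_of_condExp_eq_zero [CompleteSpace E] [IsFiniteMeasure P]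
    {𝓖 : MeasurableSpace Ω} (h𝓖 : 𝓖 ≤ mΩ) (hf : StronglyMeasurable[𝓖] f) (hf2 : MemLp f 2 P)
    (hg2 : MemLp g 2 P) (hg : P[g | 𝓖] =ᵐ[P] 0) : ∫ ω, ⟪f ω, g ω⟫ ∂P = 0 := by
  have hpull : P[fun ω => ⟪f ω, g ω⟫ | 𝓖] =ᵐ[P] fun ω => ⟪f ω, P[g | 𝓖] ω⟫ :=
    condExp_bilin_of_stronglyMeasurable_left (innerSL ℝ) hf (integrable_inner_of_memLp_two hf2 hg2)
      (hg2.integrable one_le_two)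
  rw [← integral_condExp h𝓖, integral_congr_ae hpull]
  refine integral_eq_zero_of_ae ?_
  filter_upwards [hg] with ω hω
  simp [hω]

end SquareIntegrable

section Chain

variable {Ω E : Type*} {mΩ : MeasurableSpace Ω} [NormedAddCommGroup E] [InnerProductSpace ℝ E]

/-- An Euler–Maruyama chain `(X, V)` for the underdamped Langevin dynamics with damping rate `γ`
and time step `h`, driven by a random force `B` and a noise `ξ`. The force is an arbitrary adapted
process, which covers stochastic gradients `b (X n) (w n)`, and the noise need only be a
square-integrable martingale difference sequence; `𝓕 n` is the information available when `ξ n` is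
drawn. -/
structure IsLangevinEulerChain (𝓕 : Filtration ℕ mΩ) (P : Measure Ω) (γ h : ℝ)
    (X V B ξ : ℕ → Ω → E) : Prop where
  position_succ : ∀ n ω, X (n + 1) ω = X n ω + h • V n ω
  velocity_succ : ∀ n ω, V (n + 1) ω = V n ω - h • B n ω - (γ * h) • V n ω + √(2 * γ * h) • ξ n ω
  adapted_position : StronglyAdapted 𝓕 X
  adapted_velocity : StronglyAdapted 𝓕 V
  adapted_force : StronglyAdapted 𝓕 B
  memLp_position_zero : MemLp (X 0) 2 P
  memLp_velocity_zero : MemLp (V 0) 2 P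
  memLp_noise : ∀ n, MemLp (ξ n) 2 P
  condExp_noise : ∀ n, P[ξ n | 𝓕 n] =ᵐ[P] 0

namespace IsLangevinEulerChain

variable {𝓕 : Filtration ℕ mΩ} {P : Measure Ω} {γ h C₀ C₁ m κ : ℝ} {X V B ξ : ℕ → Ω → E}

/-- Half the gradient in the velocity of the energy of the displacement, taken after the noise-free
part of the `n`-th step: the noise enters the energy, to first order, through its inner product with
this vector. -/
def energyGradient (γ h : ℝ) (X V B : ℕ → Ω → E) (n : ℕ) (ω : Ω) : E :=
  γ • (X n ω - X 0 ω + h • V n ω) + (2 : ℝ) • (V n ω - V 0 ω - h • (B n ω + γ • V n ω))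

lemma lyapunov_displacement_succ_le (hchain : IsLangevinEulerChain 𝓕 P γ h X V B ξ)
    (hB : ∀ n ω, ‖B n ω‖ ≤ C₁ * (1 + ‖X n ω‖))
    (hdrift : ∀ n ω, m * ‖X n ω‖ ^ 2 - C₀ ≤ ⟪X n ω, B n ω⟫) (hC₀ : 0 ≤ C₀) (hm : 0 < m)
    (hγ : 0 < γ) (hγm : 32 * C₁ ^ 2 ≤ γ ^ 2 * m) (hh : 0 ≤ h) (hγh : γ * h ≤ 1 / 2)
    (n : ℕ) (ω : Ω) :
    lyapunov γ (X (n + 1) ω - X 0 ω) (V (n + 1) ω - V 0 ω) ≤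
      lyapunov γ (X n ω - X 0 ω) (V n ω - V 0 ω)
        + γ * driftConst C₀ C₁ m * h * (1 + ‖X 0 ω‖ ^ 2 + ‖V 0 ω‖ ^ 2)
        + 2 * √(2 * γ * h) * ⟪energyGradient γ h X V B n ω, ξ n ω⟫
        + 4 * γ * h * ‖ξ n ω‖ ^ 2 := by
  have hX : X (n + 1) ω - X 0 ω = X n ω - X 0 ω + h • V n ω := by
    rw [hchain.position_succ]; module
  have hV : V (n + 1) ω - V 0 ω =
      V n ω - V 0 ω - h • (B n ω + γ • V n ω) + √(2 * γ * h) • ξ n ω := by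
    rw [hchain.velocity_succ]; module
  have hnoise : ‖√(2 * γ * h) • ξ n ω‖ ^ 2 = 2 * γ * h * ‖ξ n ω‖ ^ 2 := by
    rw [norm_smul_of_nonneg (Real.sqrt_nonneg _), mul_pow, Real.sq_sqrt (by positivity)]
  have hmean := lyapunov_euler_step_sub_le hC₀ hm hγ hγm hh hγh (hB n ω) (hdrift n ω)
    (V n ω) (X 0 ω) (V 0 ω)
  rw [hX, hV, lyapunov_add_right, hnoise, inner_smul_right, ← energyGradient]
  linarith

lemma stronglyMeasurable_energyGradient (hchain : IsLangevinEulerChain 𝓕 P γ h X V B ξ) (n : ℕ) :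
    StronglyMeasurable[𝓕 n] (energyGradient γ h X V B n) := by
  have hX := hchain.adapted_position n
  have hV := hchain.adapted_velocity n
  have hX₀ := hchain.adapted_position.stronglyMeasurable_le n.zero_le
  have hV₀ := hchain.adapted_velocity.stronglyMeasurable_le n.zero_le
  exact (((hX.sub hX₀).add (hV.const_smul h)).const_smul γ).add
    (((hV.sub hV₀).sub (((hchain.adapted_force n).add (hV.const_smul γ)).const_smul h)).const_smul
      (2 : ℝ))

section FiniteMeasure

variable [IsFiniteMeasure P]

lemma memLp_force_of_memLp_position (hchain : IsLangevinEulerChain 𝓕 P γ h X V B ξ)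
    (hB : ∀ n ω, ‖B n ω‖ ≤ C₁ * (1 + ‖X n ω‖)) {n : ℕ} (hX : MemLp (X n) 2 P) :
    MemLp (B n) 2 P :=
  (((memLp_const (1 : ℝ)).add hX.norm).const_mul C₁).mono'
    ((hchain.adapted_force n).mono (𝓕.le n)).aestronglyMeasurable (ae_of_all _ (hB n))

lemma memLp_position_velocity (hchain : IsLangevinEulerChain 𝓕 P γ h X V B ξ)
    (hB : ∀ n ω, ‖B n ω‖ ≤ C₁ * (1 + ‖X n ω‖)) (n : ℕ) :
    MemLp (X n) 2 P ∧ MemLp (V n) 2 P := by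
  induction n with
  | zero => exact ⟨hchain.memLp_position_zero, hchain.memLp_velocity_zero⟩
  | succ n ih =>
    obtain ⟨hX, hV⟩ := ih
    have hBn := hchain.memLp_force_of_memLp_position hB hX
    rw [funext (hchain.position_succ n), funext (hchain.velocity_succ n)]
    exact ⟨hX.add (hV.const_smul h), ((hV.sub (hBn.const_smul h)).sub (hV.const_smul (γ * h))).add
      ((hchain.memLp_noise n).const_smul _)⟩

lemma memLp_position (hchain : IsLangevinEulerChain 𝓕 P γ h X V B ξ)
    (hB : ∀ n ω, ‖B n ω‖ ≤ C₁ * (1 + ‖X n ω‖)) (n : ℕ) : MemLp (X n) 2 P :=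
  (hchain.memLp_position_velocity hB n).1

lemma memLp_velocity (hchain : IsLangevinEulerChain 𝓕 P γ h X V B ξ)
    (hB : ∀ n ω, ‖B n ω‖ ≤ C₁ * (1 + ‖X n ω‖)) (n : ℕ) : MemLp (V n) 2 P :=
  (hchain.memLp_position_velocity hB n).2

lemma memLp_force (hchain : IsLangevinEulerChain 𝓕 P γ h X V B ξ)
    (hB : ∀ n ω, ‖B n ω‖ ≤ C₁ * (1 + ‖X n ω‖)) (n : ℕ) : MemLp (B n) 2 P :=
  hchain.memLp_force_of_memLp_position hB (hchain.memLp_position hB n)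

lemma integrable_lyapunov_displacement (hchain : IsLangevinEulerChain 𝓕 P γ h X V B ξ)
    (hB : ∀ n ω, ‖B n ω‖ ≤ C₁ * (1 + ‖X n ω‖)) (n : ℕ) :
    Integrable (fun ω => lyapunov γ (X n ω - X 0 ω) (V n ω - V 0 ω)) P :=
  integrable_lyapunov γ ((hchain.memLp_position hB n).sub hchain.memLp_position_zero)
    ((hchain.memLp_velocity hB n).sub hchain.memLp_velocity_zero)

lemma integrable_one_add_norm_sq_zero (hchain : IsLangevinEulerChain 𝓕 P γ h X V B ξ) :
    Integrable (fun ω => 1 + ‖X 0 ω‖ ^ 2 + ‖V 0 ω‖ ^ 2) P :=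
  ((integrable_const 1).add (integrable_norm_sq_of_memLp_two hchain.memLp_position_zero)).add
    (integrable_norm_sq_of_memLp_two hchain.memLp_velocity_zero)

lemma memLp_energyGradient (hchain : IsLangevinEulerChain 𝓕 P γ h X V B ξ)
    (hB : ∀ n ω, ‖B n ω‖ ≤ C₁ * (1 + ‖X n ω‖)) (n : ℕ) :
    MemLp (energyGradient γ h X V B n) 2 P := by
  have hX := hchain.memLp_position hB n
  have hV := hchain.memLp_velocity hB n
  exact (((hX.sub hchain.memLp_position_zero).add (hV.const_smul h)).const_smul γ).add
    (((hV.sub hchain.memLp_velocity_zero).sub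
      (((hchain.memLp_force hB n).add (hV.const_smul γ)).const_smul h)).const_smul (2 : ℝ))

variable [CompleteSpace E]

lemma integral_inner_energyGradient_noise (hchain : IsLangevinEulerChain 𝓕 P γ h X V B ξ)
    (hB : ∀ n ω, ‖B n ω‖ ≤ C₁ * (1 + ‖X n ω‖)) (n : ℕ) :
    ∫ ω, ⟪energyGradient γ h X V B n ω, ξ n ω⟫ ∂P = 0 :=
  integral_inner_eq_zero_of_condExp_eq_zero (𝓕.le n) (hchain.stronglyMeasurable_energyGradient n)
    (hchain.memLp_energyGradient hB n) (hchain.memLp_noise n) (hchain.condExp_noise n)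

lemma integral_lyapunov_displacement_succ_le (hchain : IsLangevinEulerChain 𝓕 P γ h X V B ξ)
    (hB : ∀ n ω, ‖B n ω‖ ≤ C₁ * (1 + ‖X n ω‖))
    (hdrift : ∀ n ω, m * ‖X n ω‖ ^ 2 - C₀ ≤ ⟪X n ω, B n ω⟫)
    (hξ : ∀ n, ∫ ω, ‖ξ n ω‖ ^ 2 ∂P ≤ κ) (hC₀ : 0 ≤ C₀) (hm : 0 < m) (hγ : 0 < γ)
    (hγm : 32 * C₁ ^ 2 ≤ γ ^ 2 * m) (hh : 0 ≤ h) (hγh : γ * h ≤ 1 / 2) (n : ℕ) :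
    ∫ ω, lyapunov γ (X (n + 1) ω - X 0 ω) (V (n + 1) ω - V 0 ω) ∂P ≤
      ∫ ω, lyapunov γ (X n ω - X 0 ω) (V n ω - V 0 ω) ∂P
        + γ * driftConst C₀ C₁ m * h * ∫ ω, (1 + ‖X 0 ω‖ ^ 2 + ‖V 0 ω‖ ^ 2) ∂P
        + 4 * γ * h * κ := by
  have henergy := hchain.integrable_lyapunov_displacement hB
  have hdrift_int := hchain.integrable_one_add_norm_sq_zero.const_mul
    (γ * driftConst C₀ C₁ m * h)
  have hcross_int := (integrable_inner_of_memLp_two (hchain.memLp_energyGradient hB n)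
    (hchain.memLp_noise n)).const_mul (2 * √(2 * γ * h))
  have hnoise_int := (integrable_norm_sq_of_memLp_two (hchain.memLp_noise n)).const_mul
    (4 * γ * h)
  have hmono := integral_mono (henergy (n + 1))
    ((((henergy n).add hdrift_int).add hcross_int).add hnoise_int)
    (hchain.lyapunov_displacement_succ_le hB hdrift hC₀ hm hγ hγm hh hγh n)
  rw [integral_add' (((henergy n).add hdrift_int).add hcross_int) hnoise_int,
    integral_add' ((henergy n).add hdrift_int) hcross_int, integral_add' (henergy n) hdrift_int,
    integral_const_mul, integral_const_mul, integral_const_mul,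
    hchain.integral_inner_energyGradient_noise hB] at hmono
  have hnoise : 4 * γ * h * ∫ ω, ‖ξ n ω‖ ^ 2 ∂P ≤ 4 * γ * h * κ := by
    gcongr
    exact hξ n
  linarith

theorem integral_lyapunov_displacement_le (hchain : IsLangevinEulerChain 𝓕 P γ h X V B ξ)
    (hB : ∀ n ω, ‖B n ω‖ ≤ C₁ * (1 + ‖X n ω‖))
    (hdrift : ∀ n ω, m * ‖X n ω‖ ^ 2 - C₀ ≤ ⟪X n ω, B n ω⟫)
    (hξ : ∀ n, ∫ ω, ‖ξ n ω‖ ^ 2 ∂P ≤ κ) (hC₀ : 0 ≤ C₀) (hm : 0 < m) (hγ : 0 < γ)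
    (hγm : 32 * C₁ ^ 2 ≤ γ ^ 2 * m) (hh : 0 ≤ h) (hγh : γ * h ≤ 1 / 2) (N : ℕ) :
    ∫ ω, lyapunov γ (X N ω - X 0 ω) (V N ω - V 0 ω) ∂P ≤
      N * (γ * driftConst C₀ C₁ m * h * ∫ ω, (1 + ‖X 0 ω‖ ^ 2 + ‖V 0 ω‖ ^ 2) ∂P
        + 4 * γ * h * κ) := by
  induction N with
  | zero => simp [lyapunov]
  | succ n ih =>
    push_cast
    linarith [hchain.integral_lyapunov_displacement_succ_le hB hdrift hξ hC₀ hm hγ hγm hh hγh n]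

end FiniteMeasure

variable [IsProbabilityMeasure P] [CompleteSpace E]

theorem integral_norm_sq_displacement_le (hchain : IsLangevinEulerChain 𝓕 P γ h X V B ξ)
    (hB : ∀ n ω, ‖B n ω‖ ≤ C₁ * (1 + ‖X n ω‖))
    (hdrift : ∀ n ω, m * ‖X n ω‖ ^ 2 - C₀ ≤ ⟪X n ω, B n ω⟫)
    (hξ : ∀ n, ∫ ω, ‖ξ n ω‖ ^ 2 ∂P ≤ κ) (hC₀ : 0 ≤ C₀) (hm : 0 < m) (hγ : 1 ≤ γ)
    (hγm : 32 * C₁ ^ 2 ≤ γ ^ 2 * m) (hh : 0 ≤ h) (hγh : γ * h ≤ 1 / 2) (N : ℕ) :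
    ∫ ω, (‖X N ω - X 0 ω‖ ^ 2 + ‖V N ω - V 0 ω‖ ^ 2) ∂P ≤
      3 * γ * (driftConst C₀ C₁ m + 4 * κ) * N * h
        * ∫ ω, (1 + ‖X 0 ω‖ ^ 2 + ‖V 0 ω‖ ^ 2) ∂P := by
  set M := ∫ ω, (1 + ‖X 0 ω‖ ^ 2 + ‖V 0 ω‖ ^ 2) ∂P
  have hγ0 : 0 < γ := zero_lt_one.trans_le hγ
  have hκ : 0 ≤ κ := (integral_nonneg fun ω => sq_nonneg ‖ξ 0 ω‖).trans (hξ 0)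
  have hM : 1 ≤ M := by
    have hone : ∫ _, (1 : ℝ) ∂P ≤ M := integral_mono (integrable_const 1)
      hchain.integrable_one_add_norm_sq_zero fun ω => by
        linarith [sq_nonneg ‖X 0 ω‖, sq_nonneg ‖V 0 ω‖]
    simpa using hone
  have henergy := hchain.integrable_lyapunov_displacement hB N
  calc ∫ ω, (‖X N ω - X 0 ω‖ ^ 2 + ‖V N ω - V 0 ω‖ ^ 2) ∂P
      ≤ ∫ ω, 3 * lyapunov γ (X N ω - X 0 ω) (V N ω - V 0 ω) ∂P :=
        integral_mono_of_nonneg (ae_of_all _ fun ω => by positivity) (henergy.const_mul 3)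
          (ae_of_all _ fun ω => norm_sq_add_norm_sq_le_three_mul_lyapunov hγ _ _)
    _ = 3 * ∫ ω, lyapunov γ (X N ω - X 0 ω) (V N ω - V 0 ω) ∂P := integral_const_mul _ _
    _ ≤ 3 * (N * (γ * driftConst C₀ C₁ m * h * M + 4 * γ * h * κ)) := by
        gcongr
        exact hchain.integral_lyapunov_displacement_le hB hdrift hξ hC₀ hm hγ0 hγm hh hγh N
    _ ≤ 3 * (N * (γ * driftConst C₀ C₁ m * h * M + 4 * γ * h * κ * M)) := by
        gcongr 3 * (N * (γ * driftConst C₀ C₁ m * h * M + ?_))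
        exact le_mul_of_one_le_right (by positivity) hM
    _ = 3 * γ * (driftConst C₀ C₁ m + 4 * κ) * N * h * M := by ring

theorem lintegral_norm_sq_displacement_le (hchain : IsLangevinEulerChain 𝓕 P γ h X V B ξ)
    (hB : ∀ n ω, ‖B n ω‖ ≤ C₁ * (1 + ‖X n ω‖))
    (hdrift : ∀ n ω, m * ‖X n ω‖ ^ 2 - C₀ ≤ ⟪X n ω, B n ω⟫)
    (hξ : ∀ n, ∫ ω, ‖ξ n ω‖ ^ 2 ∂P ≤ κ) (hC₀ : 0 ≤ C₀) (hm : 0 < m) (hγ : 1 ≤ γ)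
    (hγm : 32 * C₁ ^ 2 ≤ γ ^ 2 * m) (hh : 0 ≤ h) (hγh : γ * h ≤ 1 / 2) (N : ℕ) :
    (∫⁻ ω, ENNReal.ofReal (‖X N ω - X 0 ω‖ ^ 2 + ‖V N ω - V 0 ω‖ ^ 2) ∂P) ≤
      ENNReal.ofReal (3 * γ * (driftConst C₀ C₁ m + 4 * κ) * N * h) *
        ∫⁻ ω, ENNReal.ofReal ((‖X 0 ω‖ + ‖V 0 ω‖ + 1) ^ 2) ∂P := by
  have hκ : 0 ≤ κ := (integral_nonneg fun ω => sq_nonneg ‖ξ 0 ω‖).trans (hξ 0)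
  have hC := (driftConst_pos (C₁ := C₁) hC₀ hm).le
  have hdisplacement : Integrable (fun ω => ‖X N ω - X 0 ω‖ ^ 2 + ‖V N ω - V 0 ω‖ ^ 2) P :=
    (integrable_norm_sq_of_memLp_two
      ((hchain.memLp_position hB N).sub hchain.memLp_position_zero)).add
    (integrable_norm_sq_of_memLp_two
      ((hchain.memLp_velocity hB N).sub hchain.memLp_velocity_zero))
  rw [← ofReal_integral_eq_lintegral_ofReal hdisplacement (ae_of_all _ fun ω => by positivity)]
  calc ENNReal.ofReal (∫ ω, (‖X N ω - X 0 ω‖ ^ 2 + ‖V N ω - V 0 ω‖ ^ 2) ∂P)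
      ≤ ENNReal.ofReal (3 * γ * (driftConst C₀ C₁ m + 4 * κ) * N * h) *
          ENNReal.ofReal (∫ ω, (1 + ‖X 0 ω‖ ^ 2 + ‖V 0 ω‖ ^ 2) ∂P) := by
        rw [← ENNReal.ofReal_mul (by positivity)]
        exact ENNReal.ofReal_le_ofReal
          (hchain.integral_norm_sq_displacement_le hB hdrift hξ hC₀ hm hγ hγm hh hγh N)
    _ ≤ ENNReal.ofReal (3 * γ * (driftConst C₀ C₁ m + 4 * κ) * N * h) *
          ∫⁻ ω, ENNReal.ofReal ((‖X 0 ω‖ + ‖V 0 ω‖ + 1) ^ 2) ∂P := by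
        rw [ofReal_integral_eq_lintegral_ofReal hchain.integrable_one_add_norm_sq_zero
          (ae_of_all _ fun ω => by positivity)]
        gcongr with ω
        nlinarith [norm_nonneg (X 0 ω), norm_nonneg (V 0 ω),
          mul_nonneg (norm_nonneg (X 0 ω)) (norm_nonneg (V 0 ω))]

end IsLangevinEulerChain

end Chain

section Gaussian

lemma integral_norm_sq_stdGaussian (E : Type*) [NormedAddCommGroup E] [InnerProductSpace ℝ E]
    [FiniteDimensional ℝ E] [MeasurableSpace E] [BorelSpace E] :
    ∫ x, ‖x‖ ^ 2 ∂stdGaussian E = Module.finrank ℝ E := by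
  let e := stdOrthonormalBasis ℝ E
  have hcoord : ∀ i, ∫ x, ⟪e i, x⟫ ^ 2 ∂stdGaussian E = 1 := fun i => by
    have hvar := variance_dual_stdGaussian (innerSL ℝ (e i))
    rw [variance_of_integral_eq_zero (by fun_prop) (integral_strongDual_stdGaussian _)] at hvar
    simpa using hvar
  have hint : ∀ i, Integrable (fun x => ⟪e i, x⟫ ^ 2) (stdGaussian E) := fun i =>
    (IsGaussian.memLp_two_id.const_inner (e i)).integrable_sq
  simp_rw [← e.sum_sq_inner_right]
  rw [integral_finsetSum _ fun i _ => hint i]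
  simp [hcoord]

variable {Ω E : Type*} {mΩ : MeasurableSpace Ω} {P : Measure Ω} [NormedAddCommGroup E]
  [InnerProductSpace ℝ E] [FiniteDimensional ℝ E] [MeasurableSpace E] [BorelSpace E] {ξ : Ω → E}

lemma memLp_two_of_map_eq_stdGaussian (hξ : AEMeasurable ξ P) (hlaw : P.map ξ = stdGaussian E) :
    MemLp ξ 2 P := by
  refine (memLp_map_measure_iff (g := id) (by fun_prop) hξ).1 ?_
  rw [hlaw]
  exact IsGaussian.memLp_two_id

lemma integral_eq_zero_of_map_eq_stdGaussian (hξ : AEMeasurable ξ P)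
    (hlaw : P.map ξ = stdGaussian E) : ∫ ω, ξ ω ∂P = 0 := by
  rw [← integral_id_stdGaussian (E := E), ← hlaw, integral_map hξ (by fun_prop)]

lemma integral_norm_sq_of_map_eq_stdGaussian (hξ : AEMeasurable ξ P)
    (hlaw : P.map ξ = stdGaussian E) : ∫ ω, ‖ξ ω‖ ^ 2 ∂P = Module.finrank ℝ E := by
  rw [← integral_norm_sq_stdGaussian, ← hlaw, integral_map hξ (by fun_prop)]

lemma map_eq_stdGaussian_of_map_coord {ι : Type*} [Fintype ι] {ξ : Ω → EuclideanSpace ℝ ι}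
    (hξ : Measurable ξ)
    (hlaw : P.map (fun ω i => ξ ω i) = Measure.pi fun _ : ι => gaussianReal 0 1) :
    P.map ξ = stdGaussian (EuclideanSpace ℝ ι) := by
  rw [← map_pi_eq_stdGaussian, ← hlaw, Measure.map_map (by fun_prop) (by fun_prop)]
  rfl

end Gaussian

section Independence

variable {Ω ι : Type*} {mΩ : MeasurableSpace Ω} {P : Measure Ω} {𝓜 : ι → MeasurableSpace Ω}

/-- The information carried by a family of σ-algebras `𝓜` except for the terms `e n, e (n + 1), …`
of a sequence of indices: what is known before `e n` is revealed, everything outside the sequence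
being known from the start. -/
def filtrationBefore (𝓜 : ι → MeasurableSpace Ω) (h𝓜 : ∀ i, 𝓜 i ≤ mΩ) (e : ℕ → ι) :
    Filtration ℕ mΩ where
  seq n := ⨆ i ∈ (e '' Set.Ici n)ᶜ, 𝓜 i
  mono' _ _ hnk := biSup_mono fun _ hi =>
    Set.compl_subset_compl.2 (Set.image_mono (Set.Ici_subset_Ici.2 hnk)) hi
  le' _ := iSup₂_le fun i _ => h𝓜 i

lemma le_filtrationBefore (h𝓜 : ∀ i, 𝓜 i ≤ mΩ) {e : ℕ → ι} {n : ℕ} {i : ι}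
    (hi : ∀ k, n ≤ k → e k ≠ i) : 𝓜 i ≤ filtrationBefore 𝓜 h𝓜 e n :=
  le_iSup₂_of_le (f := fun i (_ : i ∈ (e '' Set.Ici n)ᶜ) => 𝓜 i) i
    (fun ⟨k, hk, hki⟩ => hi k hk hki) le_rfl

lemma indep_filtrationBefore (h𝓜 : ∀ i, 𝓜 i ≤ mΩ) (hind : iIndep 𝓜 P) (e : ℕ → ι) (n : ℕ) :
    Indep (𝓜 (e n)) (filtrationBefore 𝓜 h𝓜 e n) P := by
  have hdisj : Disjoint {e n} (e '' Set.Ici n)ᶜ :=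
    Set.disjoint_singleton_left.2 fun hn => hn ⟨n, Set.self_mem_Ici, rfl⟩
  have hindep := indep_iSup_of_disjoint h𝓜 hind hdisj
  rwa [iSup_singleton] at hindep

end Independence

section StochasticGradient

variable {Ω Ω' E : Type*} {mΩ : MeasurableSpace Ω} [MeasurableSpace Ω'] {P : Measure Ω}
  [NormedAddCommGroup E] [InnerProductSpace ℝ E] [FiniteDimensional ℝ E] [MeasurableSpace E]
  [BorelSpace E] {b : E → Ω' → E} {γ h C₀ C₁ m : ℝ} {X V ξ : ℕ → Ω → E} {w : ℕ → Ω → Ω'}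

lemma adapted_of_recursion {𝓕 : Filtration ℕ mΩ} (hb : Measurable (Function.uncurry b))
    (hX₀ : Measurable[𝓕 0] (X 0)) (hV₀ : Measurable[𝓕 0] (V 0)) (hw : Adapted 𝓕 w)
    (hξ : ∀ n, Measurable[𝓕 (n + 1)] (ξ n)) (hX : ∀ n ω, X (n + 1) ω = X n ω + h • V n ω)
    (hV : ∀ n ω, V (n + 1) ω = V n ω - h • b (X n ω) (w n ω) - (γ * h) • V n ω
      + √(2 * γ * h) • ξ n ω) (n : ℕ) :
    Measurable[𝓕 n] (X n) ∧ Measurable[𝓕 n] (V n) := by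
  induction n with
  | zero => exact ⟨hX₀, hV₀⟩
  | succ n ih =>
    have hmono : 𝓕 n ≤ 𝓕 (n + 1) := 𝓕.mono n.le_succ
    have hforce : Measurable[𝓕 (n + 1)] fun ω => b (X n ω) (w n ω) :=
      (hb.comp (ih.1.prodMk (hw n))).mono hmono le_rfl
    have hXn := ih.1.mono hmono le_rfl
    have hVn := ih.2.mono hmono le_rfl
    rw [funext (hX n), funext (hV n)]
    exact ⟨hXn.add (hVn.const_smul h), ((hVn.sub (hforce.const_smul h)).sub
      (hVn.const_smul (γ * h))).add ((hξ n).const_smul _)⟩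

theorem exists_isLangevinEulerChain_of_iIndep [IsProbabilityMeasure P]
    (hb : Measurable (Function.uncurry b)) (hX₀ : Measurable (X 0)) (hV₀ : Measurable (V 0))
    (hξ : ∀ n, Measurable (ξ n)) (hw : ∀ n, Measurable (w n))
    (hind : iIndep (fun i : Option (ℕ ⊕ ℕ) =>
      Option.elim i (MeasurableSpace.comap (fun ω => (X 0 ω, V 0 ω)) inferInstance)
        (Sum.elim (fun n => MeasurableSpace.comap (ξ n) inferInstance)
          fun n => MeasurableSpace.comap (w n) inferInstance)) P)
    (hX : ∀ n ω, X (n + 1) ω = X n ω + h • V n ω)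
    (hV : ∀ n ω, V (n + 1) ω = V n ω - h • b (X n ω) (w n ω) - (γ * h) • V n ω
      + √(2 * γ * h) • ξ n ω)
    (hX₀2 : MemLp (X 0) 2 P) (hV₀2 : MemLp (V 0) 2 P) (hξ2 : ∀ n, MemLp (ξ n) 2 P)
    (hξ0 : ∀ n, ∫ ω, ξ n ω ∂P = 0) :
    ∃ 𝓕 : Filtration ℕ mΩ,
      IsLangevinEulerChain 𝓕 P γ h X V (fun n ω => b (X n ω) (w n ω)) ξ := by
  set 𝓜 : Option (ℕ ⊕ ℕ) → MeasurableSpace Ω := fun i =>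
    Option.elim i (MeasurableSpace.comap (fun ω => (X 0 ω, V 0 ω)) inferInstance)
      (Sum.elim (fun n => MeasurableSpace.comap (ξ n) inferInstance)
        fun n => MeasurableSpace.comap (w n) inferInstance)
  have h𝓜 : ∀ i, 𝓜 i ≤ mΩ := by
    rintro (_ | n | n)
    exacts [(hX₀.prodMk hV₀).comap_le, (hξ n).comap_le, (hw n).comap_le]
  let 𝓕 := filtrationBefore 𝓜 h𝓜 fun n => some (Sum.inl n)
  have hinit : Measurable[𝓕 0] fun ω => (X 0 ω, V 0 ω) :=
    measurable_iff_comap_le.2 (le_filtrationBefore h𝓜 (i := none) (by simp))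
  have hw𝓕 : Adapted 𝓕 w := fun n =>
    measurable_iff_comap_le.2 (le_filtrationBefore h𝓜 (i := some (Sum.inr n)) (by simp))
  have hξ𝓕 : ∀ n, Measurable[𝓕 (n + 1)] (ξ n) := fun n =>
    measurable_iff_comap_le.2 (le_filtrationBefore h𝓜 (i := some (Sum.inl n)) (by simp; lia))
  have hadapted := adapted_of_recursion hb hinit.fst hinit.snd hw𝓕 hξ𝓕 hX hV
  exact ⟨𝓕, {
    position_succ := hX
    velocity_succ := hV
    adapted_position := fun n => (hadapted n).1.stronglyMeasurable
    adapted_velocity := fun n => (hadapted n).2.stronglyMeasurable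
    adapted_force := fun n => (hb.comp ((hadapted n).1.prodMk (hw𝓕 n))).stronglyMeasurable
    memLp_position_zero := hX₀2
    memLp_velocity_zero := hV₀2
    memLp_noise := hξ2
    condExp_noise := fun n => by
      have hcond := condExp_indep_eq (hξ n).comap_le (𝓕.le n)
        (comap_measurable (ξ n)).stronglyMeasurable
        (indep_filtrationBefore h𝓜 hind (fun n => some (Sum.inl n)) n)
      rwa [hξ0 n] at hcond }⟩

theorem statement15_general (hb : Measurable (Function.uncurry b)) (hC₀ : 0 ≤ C₀) (hm : 0 < m)
    (hbgrowth : ∀ x ω', ‖b x ω'‖ ≤ C₁ * (1 + ‖x‖))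
    (hbdrift : ∀ x ω', m * ‖x‖ ^ 2 - C₀ ≤ ⟪x, b x ω'⟫) :
    ∃ γ₀ > (0 : ℝ), ∀ γ ≥ γ₀, ∃ C > (0 : ℝ), ∃ h₀ > (0 : ℝ), ∀ h : ℝ, 0 < h → h ≤ h₀ →
      ∀ (Ω : Type*) (_ : MeasurableSpace Ω) (P : Measure Ω), IsProbabilityMeasure P →
      ∀ (X V ξ : ℕ → Ω → E) (w : ℕ → Ω → Ω'),
        Measurable (X 0) → Measurable (V 0) →
        (∀ n, Measurable (ξ n)) → (∀ n, Measurable (w n)) →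
        (∀ n, P.map (ξ n) = stdGaussian E) →
        iIndep (fun i : Option (ℕ ⊕ ℕ) =>
          Option.elim i (MeasurableSpace.comap (fun ω => (X 0 ω, V 0 ω)) inferInstance)
            (Sum.elim (fun n => MeasurableSpace.comap (ξ n) inferInstance)
              fun n => MeasurableSpace.comap (w n) inferInstance)) P →
        (∀ n ω, X (n + 1) ω = X n ω + h • V n ω) →
        (∀ n ω, V (n + 1) ω = V n ω - h • b (X n ω) (w n ω) - (γ * h) • V n ω
          + √(2 * γ * h) • ξ n ω) →
        (∫⁻ ω, ENNReal.ofReal ((‖X 0 ω‖ + ‖V 0 ω‖ + 1) ^ 2) ∂P) < ∞ →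
        ∀ N : ℕ,
          (∫⁻ ω, ENNReal.ofReal (‖X N ω - X 0 ω‖ ^ 2 + ‖V N ω - V 0 ω‖ ^ 2) ∂P) ≤
            ENNReal.ofReal (C * N * h) *
              ∫⁻ ω, ENNReal.ofReal ((‖X 0 ω‖ + ‖V 0 ω‖ + 1) ^ 2) ∂P := by
  refine ⟨1 + 32 * C₁ ^ 2 / m, by positivity, fun γ hγ => ?_⟩
  have hγ1 : 1 ≤ γ := (le_add_of_nonneg_right (by positivity)).trans hγ
  have hγm : 32 * C₁ ^ 2 ≤ γ ^ 2 * m := by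
    rw [← div_le_iff₀ hm]
    nlinarith
  refine ⟨3 * γ * (driftConst C₀ C₁ m + 4 * Module.finrank ℝ E), ?_, 1 / (2 * γ), by positivity, ?_⟩
  · have hrate := driftConst_pos (C₁ := C₁) hC₀ hm
    positivity
  intro h hh0 hh Ω _ P _ X V ξ w hX₀ hV₀ hξ hw hlaw hind hX hV hfin N
  have hX₀2 : MemLp (X 0) 2 P := memLp_two_of_lintegral_sq_lt_top hX₀.aestronglyMeasurable hfin
    fun ω => by linarith [norm_nonneg (V 0 ω)]
  have hV₀2 : MemLp (V 0) 2 P := memLp_two_of_lintegral_sq_lt_top hV₀.aestronglyMeasurable hfin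
    fun ω => by linarith [norm_nonneg (X 0 ω)]
  obtain ⟨𝓕, hchain⟩ := exists_isLangevinEulerChain_of_iIndep hb hX₀ hV₀ hξ hw hind hX hV
    hX₀2 hV₀2 (fun n => memLp_two_of_map_eq_stdGaussian (hξ n).aemeasurable (hlaw n))
    (fun n => integral_eq_zero_of_map_eq_stdGaussian (hξ n).aemeasurable (hlaw n))
  refine hchain.lintegral_norm_sq_displacement_le (fun n ω => hbgrowth _ _) (fun n ω => hbdrift _ _)
    (fun n => ?_) hC₀ hm hγ1 hγm hh0.le ?_ N
  · exact (integral_norm_sq_of_map_eq_stdGaussian (hξ n).aemeasurable (hlaw n)).le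
  · rw [le_div_iff₀ (by positivity)] at hh
    linarith

end StochasticGradient

/-- diffusion estimate `E|Z̃_N − Z̃₀|² ≤ C·N·h·E(|X̃₀|+|Ṽ₀|+1)²` for the
stochastic gradient Euler–Maruyama chain for the underdamped Langevin dynamics,
under A1, A2 and A4. -/
theorem statement15 (d : ℕ) (hd : 1 ≤ d) (U : EuclideanSpace ℝ (Fin d) → ℝ)
    (C₀ C₁ m R : ℝ) (hC₀ : 0 < C₀) (hC₁ : 0 < C₁) (hm : 0 < m) (hR : 0 < R)
    -- A1
    (hU : ContDiff ℝ 3 U)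
    (hU0 : ∀ x, |U x| ≤ C₁ * (‖x‖ + 1) ^ 2)
    (hU1 : ∀ x, ‖gradient U x‖ ≤ C₁ * (‖x‖ + 1))
    (hU2 : ∀ x, ‖iteratedFDeriv ℝ 2 U x‖ ≤ C₁)
    (hU3 : ∀ x, ‖iteratedFDeriv ℝ 3 U x‖ ≤ C₁)
    -- A2
    (hconv : ∀ x, R ≤ ‖x‖ → ∀ y, m * ‖y‖ ^ 2 ≤ iteratedFDeriv ℝ 2 U x ![y, y])
    -- A4: the stochastic gradient b on a probability space (Ω', 𝒢, μ)
    (Ω' : Type) (𝒢 : MeasurableSpace Ω') (μ : Measure Ω') (hμ : IsProbabilityMeasure μ)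
    (b : EuclideanSpace ℝ (Fin d) → Ω' → EuclideanSpace ℝ (Fin d))
    (hbmeas : Measurable (Function.uncurry b))
    (hbgrowth : ∀ x ω', ‖b x ω'‖ ≤ C₁ * (1 + ‖x‖))
    (hbdiff : ∀ ω', Differentiable ℝ (fun y => b y ω'))
    (hbderiv : ∀ x ω', ‖fderiv ℝ (fun y => b y ω') x‖ ≤ C₁)
    (hbdrift : ∀ x ω', m * ‖x‖ ^ 2 - C₀ ≤ ⟪x, b x ω'⟫)
    (hbunbiased : ∀ x, (∫ ω', b x ω' ∂μ) = gradient U x) :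
    ∃ γ₀ > (0 : ℝ), ∀ γ ≥ γ₀, ∃ C > (0 : ℝ), ∃ h₀ > (0 : ℝ), ∀ h : ℝ, 0 < h → h ≤ h₀ →
      ∀ (Ω : Type) (_ : MeasurableSpace Ω) (P : Measure Ω), IsProbabilityMeasure P →
      ∀ (X V ξ : ℕ → Ω → EuclideanSpace ℝ (Fin d)) (w : ℕ → Ω → Ω'),
        Measurable (X 0) → Measurable (V 0) →
        (∀ n, Measurable (ξ n)) → (∀ n, Measurable (w n)) →
        -- each ξ_n is a standard Gaussian random vector in ℝ^d
        (∀ n, Measure.map (fun ω i => ξ n ω i) P =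
          Measure.pi fun _ : Fin d => gaussianReal 0 1) →
        -- each ω_n has law μ
        (∀ n, Measure.map (w n) P = μ) →
        -- (X₀,V₀), ξ₀, ξ₁, …, ω₀, ω₁, … are mutually independent
        iIndep (fun i : Option (ℕ ⊕ ℕ) =>
          Option.elim i (MeasurableSpace.comap (fun ω => (X 0 ω, V 0 ω)) inferInstance)
            (Sum.elim (fun n => MeasurableSpace.comap (ξ n) inferInstance)
              fun n => MeasurableSpace.comap (w n) inferInstance)) P →
        -- stochastic gradient Euler–Maruyama recursion
        (∀ n ω, X (n + 1) ω = X n ω + h • V n ω) →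
        (∀ n ω, V (n + 1) ω = V n ω - h • b (X n ω) (w n ω) - (γ * h) • V n ω
            + Real.sqrt (2 * γ * h) • ξ n ω) →
        -- finite initial second moment
        (∫⁻ ω, ENNReal.ofReal ((‖X 0 ω‖ + ‖V 0 ω‖ + 1) ^ 2) ∂P) < ∞ →
        ∀ N : ℕ, 1 ≤ N →
          (∫⁻ ω, ENNReal.ofReal (‖X N ω - X 0 ω‖ ^ 2 + ‖V N ω - V 0 ω‖ ^ 2) ∂P) ≤
            ENNReal.ofReal (C * N * h) *
              ∫⁻ ω, ENNReal.ofReal ((‖X 0 ω‖ + ‖V 0 ω‖ + 1) ^ 2) ∂P := by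
  obtain ⟨γ₀, hγ₀, hbound⟩ := statement15_general hbmeas hC₀.le hm hbgrowth hbdrift
  refine ⟨γ₀, hγ₀, fun γ hγ => ?_⟩
  obtain ⟨C, hC, h₀, hh₀, hbound⟩ := hbound γ hγ
  exact ⟨C, hC, h₀, hh₀, fun h hh hhh₀ Ω _ P hP X V ξ w hX₀ hV₀ hξ hw hlaw _ hind hX hV hfin N _ =>
    hbound h hh hhh₀ Ω _ P hP X V ξ w hX₀ hV₀ hξ hw
      (fun n => map_eq_stdGaussian_of_map_coord (hξ n) (hlaw n)) hind hX hV hfin N⟩
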